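/- arXiv:1508.06846 — 6 statements merged into one kernel-verified Lean document; each statement's English description precedes it below -/
import Mathlib

section
/- Fix integers m ≥ 2, n ≥ 3, a positive divisor p of m, and k ≥ 1. For an integer a ≥ 0 write [a]_q = 1 + q + ⋯ + q^{a−1} ∈ ℤ[q] for the q-integer. If the polynomial ∏_{i=1}^{n−1} [im]_q · [mn/p]_q divides the polynomial ∏_{i=1}^{n−1} [k+im−1]_q · [k+mn/p−1]_q in ℚ[q] (i.e., the q-Catalan number Cat_k(G(m,p,n), q) = (∏_{i=1}^{n−1} [k+im−1]_q · [k+mn/p−1]_q) / (∏_{i=1}^{n−1} [im]_q · [mn/p]_q) is a polynomial in q), then k ≡ 1 (mod m). -/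
open Polynomial

/-- The `q`-integer `[a]_q = 1 + q + ⋯ + q^{a-1}`, as a polynomial in `ℚ[q]`. -/
noncomputable def qInt (a : ℕ) : ℚ[X] := ∑ j ∈ Finset.range a, X ^ j

theorem qInt_mul_X_sub_one (a : ℕ) : qInt a * (X - 1) = X ^ a - 1 :=
  geom_sum_mul X a

theorem cyclotomic_dvd_X_pow_sub_one_iff {m : ℕ} (hm : 0 < m) (a : ℕ) :
    cyclotomic m ℚ ∣ X ^ a - 1 ↔ m ∣ a := by
  constructor
  · intro h
    have hζ := Complex.isPrimitiveRoot_exp m hm.ne'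
    have hroot : aeval (Complex.exp (2 * Real.pi * Complex.I / m)) (cyclotomic m ℚ) = 0 := by
      rw [aeval_def, ← eval_map, map_cyclotomic]
      exact hζ.isRoot_cyclotomic hm
    have hpow := aeval_eq_zero_of_dvd_aeval_eq_zero h hroot
    rw [← hζ.pow_eq_one_iff_dvd]
    simpa [sub_eq_zero] using hpow
  · rintro ⟨b, rfl⟩
    refine (cyclotomic.dvd_X_pow_sub_one m ℚ).trans ?_
    simpa [pow_mul] using sub_dvd_pow_sub_pow (X ^ m : ℚ[X]) 1 b

theorem cyclotomic_dvd_qInt_iff {m : ℕ} (hm : 2 ≤ m) (a : ℕ) :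
    cyclotomic m ℚ ∣ qInt a ↔ m ∣ a := by
  have hm0 : 0 < m := by lia
  rw [← cyclotomic_dvd_X_pow_sub_one_iff hm0, ← qInt_mul_X_sub_one,
    (cyclotomic.irreducible_rat hm0).prime.dvd_mul, or_iff_left]
  intro h
  rw [← pow_one (X : ℚ[X]), cyclotomic_dvd_X_pow_sub_one_iff hm0, Nat.dvd_one] at h
  lia

theorem squarefree_qInt {a : ℕ} (ha : a ≠ 0) : Squarefree (qInt a) := by
  have hsep : (X ^ a - 1 : ℚ[X]).Separable :=
    X_pow_sub_one_separable_iff.mpr (Nat.cast_ne_zero.mpr ha)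
  exact hsep.squarefree.squarefree_of_dvd ⟨X - 1, (qInt_mul_X_sub_one a).symm⟩

/-- For `m ≥ 2`, `n ≥ 3`, `p` a positive divisor of `m`, and `k ≥ 1`:
if `∏_{i=1}^{n-1} [im]_q ⬝ [mn/p]_q` divides `∏_{i=1}^{n-1} [k+im-1]_q ⬝ [k+mn/p-1]_q`
in `ℚ[q]` (i.e. the q-Catalan number `Cat_k(G(m,p,n), q)` is a polynomial), then
`k ≡ 1 (mod m)`. -/
theorem qCatalan_polynomial_imp_k_equiv_one
    (m n p k : ℕ) (hm : 2 ≤ m) (hn : 3 ≤ n) (hp : 0 < p) (hpm : p ∣ m) (hk : 1 ≤ k)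
    (hdvd : (∏ i ∈ Finset.Icc 1 (n - 1), qInt (i * m)) * qInt (m * n / p) ∣
            (∏ i ∈ Finset.Icc 1 (n - 1), qInt (k + i * m - 1)) * qInt (k + m * n / p - 1)) :
    k ≡ 1 [MOD m] := by
  by_contra hk1
  have hprime : Prime (cyclotomic m ℚ) := (cyclotomic.irreducible_rat (by lia)).prime
  have hden : cyclotomic m ℚ ^ 2 ∣ ∏ i ∈ Finset.Icc 1 (n - 1), qInt (i * m) := by
    have hpow : cyclotomic m ℚ ^ (n - 1) ∣ ∏ i ∈ Finset.Icc 1 (n - 1), qInt (i * m) := by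
      have h := Finset.prod_dvd_prod_of_dvd (s := Finset.Icc 1 (n - 1))
        (fun _ => cyclotomic m ℚ) (fun i => qInt (i * m))
        fun i _ => (cyclotomic_dvd_qInt_iff hm _).mpr (dvd_mul_left m i)
      simpa using h
    exact (pow_dvd_pow _ (by lia)).trans hpow
  have hnum : ¬ cyclotomic m ℚ ∣ ∏ i ∈ Finset.Icc 1 (n - 1), qInt (k + i * m - 1) := by
    intro h
    obtain ⟨i, -, hi⟩ := (hprime.dvd_finsetProd_iff _).mp h
    rw [cyclotomic_dvd_qInt_iff hm, Nat.sub_add_comm hk, Nat.dvd_add_left (dvd_mul_left m i)] at hi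
    exact hk1 ((Nat.modEq_iff_dvd' hk).mpr hi).symm
  have hsq : cyclotomic m ℚ ^ 2 ∣ qInt (k + m * n / p - 1) :=
    hprime.pow_dvd_of_dvd_mul_left 2 hnum ((hden.mul_right _).trans hdvd)
  have hpos : 0 < m * n / p :=
    Nat.div_pos ((Nat.le_of_dvd (by lia) hpm).trans (Nat.le_mul_of_pos_right m (by lia))) hp
  rw [pow_two] at hsq
  exact hprime.not_isUnit (squarefree_qInt (by lia) _ hsq)
end

section
/- Fix integers m ≥ 2, a positive divisor p of m, and k ≥ m+1. For an integer a ≥ 0 write [a]_q = 1 + q + ⋯ + q^{a−1} ∈ ℤ[q] for the q-integer. If the polynomial [m]_q · [2m/p]_q divides the polynomial [k−1]_q · [k−m−1]_q in ℚ[q] (i.e., the dual q-Catalan number Cat*_k(G(m,p,2), q) = q^{m+2} [k−1]_q [k−m−1]_q / ([m]_q [2m/p]_q) is a polynomial in q), then k ≡ 1 (mod m). -/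
open Polynomial

theorem pow_eq_one_of_aeval_qInt_eq_zero {R : Type*} [CommRing R] [Algebra ℚ R] {ζ : R} {a : ℕ}
    (h : aeval ζ (qInt a) = 0) : ζ ^ a = 1 := by
  have hsum : ∑ j ∈ Finset.range a, ζ ^ j = 0 := by simpa [qInt] using h
  have hgeom := geom_sum_mul ζ a
  rw [hsum, zero_mul] at hgeom
  exact (sub_eq_zero.mp hgeom.symm)

theorem IsPrimitiveRoot.aeval_qInt_eq_zero {R : Type*} [CommRing R] [IsDomain R] [Algebra ℚ R]
    {ζ : R} {m : ℕ} (hζ : IsPrimitiveRoot ζ m) (hm : 1 < m) : aeval ζ (qInt m) = 0 := by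
  simpa [qInt] using hζ.geom_sum_eq_zero hm

/-- For `m ≥ 2`, `p` a positive divisor of `m`, and `k ≥ m + 1`:
if `[m]_q ⬝ [2m/p]_q` divides `[k-1]_q ⬝ [k-m-1]_q` in `ℚ[q]` (i.e. the dual q-Catalan number
`Cat*_k(G(m,p,2), q) = q^{m+2} [k-1]_q [k-m-1]_q / ([m]_q [2m/p]_q)` is a polynomial), then
`k ≡ 1 (mod m)`. -/
theorem dual_qCatalan_polynomial_imp_k_equiv_one
    (m p k : ℕ) (hm : 2 ≤ m) (hp : 0 < p) (hpm : p ∣ m) (hk : m + 1 ≤ k)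
    (hdvd : qInt m * qInt (2 * m / p) ∣ qInt (k - 1) * qInt (k - m - 1)) :
    k ≡ 1 [MOD m] := by
  obtain ⟨c, hc⟩ := hdvd
  have hζ := Complex.isPrimitiveRoot_exp m (by omega)
  have hzero := congrArg (aeval (Complex.exp (2 * Real.pi * Complex.I / m))) hc
  simp only [map_mul, hζ.aeval_qInt_eq_zero hm, zero_mul, mul_eq_zero] at hzero
  have hmk : m ∣ k - 1 := by
    rcases hzero with h | h
    · exact hζ.dvd_of_pow_eq_one _ (pow_eq_one_of_aeval_qInt_eq_zero h)
    · have hdiv := hζ.dvd_of_pow_eq_one _ (pow_eq_one_of_aeval_qInt_eq_zero h)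
      rw [show k - 1 = (k - m - 1) + m by omega]
      exact hdiv.add (dvd_refl m)
  exact ((Nat.modEq_iff_dvd' (by omega)).mpr hmk).symm
end

section
/- Let m ≥ 2 and n ≥ 3 be integers and let k be any integer. Suppose that m^{n−1}·n! divides (∏_{i=1}^{n−1} (k + i m − 1)) · (k + n − 1) in ℤ, and that m^{n−1}·n! divides (∏_{i=1}^{n−1} (k − i m + m − 1)) · (k − (n−1)m + n − 1) in ℤ. Then m divides k − 1. -/
/-- If every factor `f i` is exactly divisible by `p ^ b`, then a power of `p` dividing
`(∏ f i) * x` divides `x` once the contribution of the product is removed. -/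
theorem Prime.pow_dvd_of_pow_dvd_prod_mul {ι R : Type*} [CommRing R] [IsDomain R] {p : R}
    (hp : Prime p) {s : Finset ι} {f u : ι → R} {b c : ℕ} {x : R}
    (hf : ∀ i ∈ s, f i = p ^ b * u i) (hu : ∀ i ∈ s, ¬ p ∣ u i)
    (h : p ^ (s.card * b + c) ∣ (∏ i ∈ s, f i) * x) : p ^ c ∣ x := by
  rw [Finset.prod_congr rfl hf, Finset.prod_mul_distrib, Finset.prod_const, ← pow_mul,
    mul_comm s.card b, pow_add, mul_assoc,
    mul_dvd_mul_iff_left (pow_ne_zero _ hp.ne_zero)] at h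
  refine hp.pow_dvd_of_dvd_mul_left _ (fun hdvd => ?_) h
  obtain ⟨i, hi, hdvd⟩ := hp.exists_mem_finset_dvd hdvd
  exact hu i hi hdvd

/-- If a natural number `m` does not divide `j`, then some prime has smaller valuation at `j`
than at `m`. -/
theorem Int.exists_prime_pow_of_not_natCast_dvd {m : ℕ} {j : ℤ} (hm : m ≠ 0)
    (h : ¬ (m : ℤ) ∣ j) :
    ∃ (p b d : ℕ) (u v : ℤ), p.Prime ∧ 0 < d ∧ ¬ (p : ℤ) ∣ u ∧ ¬ (p : ℤ) ∣ v ∧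
      j = (p : ℤ) ^ b * u ∧ (m : ℤ) = (p : ℤ) ^ (b + d) * v := by
  have hj : j ≠ 0 := fun h0 => h (h0 ▸ dvd_zero _)
  rw [Int.natCast_dvd, Nat.dvd_iff_prime_pow_dvd_dvd] at h
  push Not at h
  obtain ⟨p, c, hp, hcm, hcj⟩ := h
  have hcj' : ¬ (p : ℤ) ^ c ∣ j := by
    rwa [← Nat.cast_pow, Int.natCast_dvd]
  obtain ⟨a, v, hv, hmv⟩ := Nat.exists_eq_pow_mul_and_not_dvd hm p hp.ne_one
  obtain ⟨u, hju, hu⟩ := (Int.finiteMultiplicity_iff.mpr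
    ⟨by simpa using hp.ne_one, hj⟩ : FiniteMultiplicity (p : ℤ) j).exists_eq_pow_mul_and_not_dvd
  set b := multiplicity (p : ℤ) j
  have hbc : b < c := by
    by_contra! hle
    exact hcj' (hju ▸ (pow_dvd_pow _ hle).mul_right u)
  have hca : c ≤ a := by
    rw [hmv] at hcm
    exact (Nat.pow_dvd_pow_iff_le_right hp.one_lt).mp
      (((Nat.coprime_pow_left_iff (by lia) _ _).mpr
        ((Nat.Prime.coprime_iff_not_dvd hp).mpr hv)).dvd_of_dvd_mul_right hcm)
  refine ⟨p, b, a - b, u, v, hp, by lia, hu, by exact_mod_cast hv, hju, ?_⟩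
  rw [Nat.add_sub_of_le (by lia)]
  exact_mod_cast hmv

/-- For `m ≥ 2`, `n ≥ 3` and any integer `k`: if `m^{n-1} n!` divides both
`(∏_{i=1}^{n-1} (k + im - 1)) (k + n - 1)` and
`(∏_{i=1}^{n-1} (k - im + m - 1)) (k - (n-1)m + n - 1)` in `ℤ`, then `m ∣ k - 1`. -/
theorem mult_triv_det_integer_imp_k_equiv_one
    (m n : ℕ) (hm : 2 ≤ m) (hn : 3 ≤ n) (k : ℤ)
    (h1 : ((m : ℤ) ^ (n - 1) * (n.factorial : ℤ)) ∣
      (∏ i ∈ Finset.Icc 1 (n - 1), (k + (i : ℤ) * m - 1)) * (k + n - 1))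
    (h2 : ((m : ℤ) ^ (n - 1) * (n.factorial : ℤ)) ∣
      (∏ i ∈ Finset.Icc 1 (n - 1), (k - (i : ℤ) * m + m - 1)) * (k - ((n : ℤ) - 1) * m + n - 1)) :
    (m : ℤ) ∣ k - 1 := by
  by_contra hndvd
  obtain ⟨p, b, d, u, v, hp, hd, hu, hv, hj, hmv⟩ :=
    Int.exists_prime_pow_of_not_natCast_dvd (by lia) hndvd
  have hpZ : Prime (p : ℤ) := Nat.prime_iff_prime_int.mp hp
  obtain ⟨N, rfl⟩ : ∃ N, n = N + 1 := ⟨n - 1, by lia⟩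
  rw [Nat.add_sub_cancel] at h1 h2
  obtain ⟨r, n', hn', hr⟩ := Nat.exists_eq_pow_mul_and_not_dvd (Nat.succ_ne_zero N) p hp.ne_one
  obtain ⟨s, q, hq, hs⟩ := Nat.exists_eq_pow_mul_and_not_dvd (n := N) (by lia) p hp.ne_one
  have hunit (t : ℤ) : ¬ (p : ℤ) ∣ u + t * p ^ d * v := by
    have hdvd : (p : ℤ) ∣ t * p ^ d * v := ((dvd_pow_self _ hd.ne').mul_left t).mul_right v
    rwa [dvd_add_left hdvd]
  have hfact : (p : ℤ) ^ (r + s) ∣ ((N + 1).factorial : ℤ) := by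
    rw [Nat.factorial_succ, pow_add]
    refine mod_cast mul_dvd_mul (Dvd.intro _ hr.symm) ?_
    exact (Dvd.intro _ hs.symm).trans (Nat.dvd_factorial (by lia) le_rfl)
  have hpow : (p : ℤ) ^ ((Finset.Icc 1 N).card * b + (N * d + r + s)) ∣
      (m : ℤ) ^ N * ((N + 1).factorial : ℤ) := by
    have hexp : (Finset.Icc 1 N).card * b + (N * d + r + s) = (b + d) * N + (r + s) := by
      rw [Nat.card_Icc, Nat.add_sub_cancel]
      ring
    rw [hexp, pow_add, pow_mul]
    exact mul_dvd_mul (pow_dvd_pow_of_dvd (Dvd.intro _ hmv.symm) N) hfact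
  have hdvd1 := hpZ.pow_dvd_of_pow_dvd_prod_mul (u := fun i : ℕ => u + (i : ℤ) * p ^ d * v)
    (fun i _ => by linear_combination hj + (i : ℤ) * hmv) (fun i _ => hunit i) (hpow.trans h1)
  have hdvd2 := hpZ.pow_dvd_of_pow_dvd_prod_mul
    (u := fun i : ℕ => u + (1 - (i : ℤ)) * p ^ d * v)
    (fun i _ => by linear_combination hj + (1 - (i : ℤ)) * hmv) (fun i _ => hunit _)
    (hpow.trans h2)
  have hle : N * d + r + s ≤ s + (b + d) := by
    have hdiff : (p : ℤ) ^ (N * d + r + s) ∣ p ^ (s + (b + d)) * (q * v) := by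
      have hsZ : (N : ℤ) = p ^ s * q := mod_cast hs
      have heq : (p : ℤ) ^ (s + (b + d)) * (q * v) = (k + ((N + 1 : ℕ) : ℤ) - 1) -
          (k - (((N + 1 : ℕ) : ℤ) - 1) * m + ((N + 1 : ℕ) : ℤ) - 1) := by
        push_cast
        linear_combination -(m : ℤ) * hsZ - (p : ℤ) ^ s * q * hmv
      exact heq ▸ dvd_sub hdvd1 hdvd2
    have hqv : ¬ (p : ℤ) ∣ q * v := hpZ.not_dvd_mul (by exact_mod_cast hq) hv
    exact (pow_dvd_pow_iff hpZ.ne_zero hpZ.not_isUnit).mp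
      (hpZ.pow_dvd_of_dvd_mul_right _ hqv hdiff)
  have hNd : 2 * d ≤ N * d := Nat.mul_le_mul_right d (by lia)
  have hbr : b ≤ r := by
    by_contra! hrb
    have hsum : (p : ℤ) ^ (r + 1) ∣ k + ((N + 1 : ℕ) : ℤ) - 1 :=
      (pow_dvd_pow _ (by lia)).trans hdvd1
    have hkdvd : (p : ℤ) ^ (r + 1) ∣ k - 1 := hj ▸ (pow_dvd_pow _ hrb).mul_right u
    have hndvd : (p : ℤ) ^ (r + 1) ∣ ((N + 1 : ℕ) : ℤ) := by
      have heq : ((N + 1 : ℕ) : ℤ) = (k + ((N + 1 : ℕ) : ℤ) - 1) - (k - 1) := by ring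
      exact heq ▸ dvd_sub hsum hkdvd
    have hnat : p ^ (r + 1) ∣ p ^ r * n' := hr ▸ (by exact_mod_cast hndvd)
    rw [pow_succ] at hnat
    exact hn' (Nat.dvd_of_mul_dvd_mul_left (pow_pos hp.pos r) hnat)
  lia
end

section
/- Let n ≥ 3 and m ≥ 1 be integers. In ℚ[X] define f(X) = (1/n!) · ∏_{i=1}^{n−1}(X+i) · (mX+n), g(X) = (1/n!) · ∏_{i=1}^{n−1}(X−i+1) · (m(X−n+1)+n), and h(X) = (n!/2) · (f(X) + g(X)) − (n−2)! · X · (f(X) − g(X)). Then h is a monic polynomial of degree n−1 and every coefficient of h is an integer. -/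
open Polynomial

/-- The product `(X + j)(X + j + 1)⋯(X + j + N - 1)` of `N` consecutive linear factors. -/
noncomputable def consecutiveProd (N : ℕ) (j : ℤ) : ℤ[X] :=
  ∏ i ∈ Finset.range N, (X + C (j + (i : ℤ)))

lemma consecutiveProd_succ (N : ℕ) (j : ℤ) :
    consecutiveProd (N + 1) j = consecutiveProd N j * (X + C (j + N)) :=
  Finset.prod_range_succ _ _

lemma consecutiveProd_succ_left (N : ℕ) (j : ℤ) :
    consecutiveProd (N + 1) j = (X + C j) * consecutiveProd N (j + 1) := by
  rw [consecutiveProd, Finset.prod_range_succ', mul_comm, consecutiveProd]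
  congr 1
  · simp
  · refine Finset.prod_congr rfl fun i _ => ?_
    push_cast
    congr 2
    ring

/-- Shifting `N` consecutive factors does not change their product modulo `N`. -/
lemma dvd_consecutiveProd_shift (N : ℕ) (j : ℤ) (t : ℕ) :
    (C (N : ℤ)) ∣ consecutiveProd N (j + t) - consecutiveProd N j := by
  induction t with
  | zero => simp
  | succ t ih =>
    have step : ∀ l : ℤ, (C (N : ℤ)) ∣ consecutiveProd N (l + 1) - consecutiveProd N l := by
      intro l
      cases N with
      | zero => simp [consecutiveProd]
      | succ M =>
        refine ⟨consecutiveProd M (l + 1), ?_⟩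
        rw [consecutiveProd_succ_left M l, consecutiveProd_succ M (l + 1)]
        simp only [map_add, map_one, Nat.cast_add, Nat.cast_one]
        ring
    have := dvd_add (step (j + t)) ih
    rw [sub_add_sub_cancel] at this
    simpa [add_assoc] using this

/-- `p` has leading part `X ^ (k + 2) + s X ^ (k + 1) + t X ^ k`. -/
def HasLeadingPart (k : ℕ) (p : ℚ[X]) (s t : ℚ) : Prop :=
  ∃ r : ℚ[X], r.degree < k ∧ p = X ^ (k + 2) + C s * X ^ (k + 1) + C t * X ^ k + r

lemma HasLeadingPart.mul_X_add_C {k : ℕ} {p : ℚ[X]} {s t : ℚ} (h : HasLeadingPart k p s t)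
    (a : ℚ) : HasLeadingPart (k + 1) (p * (X + C a)) (s + a) (t + a * s) := by
  obtain ⟨r, hr, rfl⟩ := h
  refine ⟨C (a * t) * X ^ k + r * (X + C a), ?_, ?_⟩
  · have hk : ((k : ℕ) : WithBot ℕ) < ((k + 1 : ℕ) : WithBot ℕ) := by exact_mod_cast k.lt_succ_self
    refine (degree_add_le _ _).trans_lt (max_lt ((degree_C_mul_X_pow_le _ _).trans_lt hk) ?_)
    rw [degree_mul, degree_X_add_C, Nat.cast_add, Nat.cast_one]
    exact WithBot.add_lt_add_right (by simp) hr
  · simp only [map_add, map_mul]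
    ring

lemma hasLeadingPart_rising (k : ℕ) :
    HasLeadingPart k (∏ i ∈ Finset.range (k + 2), (X + C ((i : ℚ) + 1)))
      ((k + 2) * (k + 3) / 2) ((k + 3) * (k + 2) * (k + 1) * (3 * k + 8) / 24) := by
  induction k with
  | zero =>
    refine ⟨0, by simp, ?_⟩
    norm_num [Finset.prod_range_succ]
    simp only [show (C 3 : ℚ[X]) = 3 from rfl, show (C 2 : ℚ[X]) = 2 from rfl]
    ring
  | succ k ih =>
    rw [Finset.prod_range_succ]
    convert ih.mul_X_add_C (((k + 2 : ℕ) : ℚ) + 1) using 1 <;> push_cast <;> ring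

lemma hasLeadingPart_falling (k : ℕ) :
    HasLeadingPart k (∏ i ∈ Finset.range (k + 2), (X + C (-(i : ℚ))))
      (-((k + 2) * (k + 1) / 2)) ((k + 2) * (k + 1) * k * (3 * k + 5) / 24) := by
  induction k with
  | zero =>
    refine ⟨0, by simp, ?_⟩
    norm_num [Finset.prod_range_succ]
    ring
  | succ k ih =>
    rw [Finset.prod_range_succ]
    convert ih.mul_X_add_C (-((k + 2 : ℕ) : ℚ)) using 1 <;> push_cast <;> ring

lemma prod_Icc_one_eq_prod_range {M : Type*} [CommMonoid M] (u : ℕ → M) (N : ℕ) :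
    ∏ i ∈ Finset.Icc 1 N, u i = ∏ i ∈ Finset.range N, u (i + 1) := by
  induction N with
  | zero => simp
  | succ N ih => rw [Finset.prod_Icc_succ_top (by omega), ih, Finset.prod_range_succ]

lemma map_consecutiveProd_one (N : ℕ) :
    (consecutiveProd N 1).map (Int.castRingHom ℚ) =
      ∏ i ∈ Finset.range N, (X + C ((i : ℚ) + 1)) := by
  simp [consecutiveProd, Polynomial.map_prod, add_comm]

lemma map_consecutiveProd_falling (N : ℕ) :
    (consecutiveProd N (1 - N)).map (Int.castRingHom ℚ) =
      ∏ i ∈ Finset.range N, (X + C (-(i : ℚ))) := by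
  rw [← Finset.prod_range_reflect, consecutiveProd, Polynomial.map_prod]
  refine Finset.prod_congr rfl fun i hi => ?_
  have hi' : i + 1 ≤ N := Finset.mem_range.mp hi
  rw [Nat.sub_sub, Nat.cast_sub (by omega), Polynomial.map_add, map_X, map_C]
  congr 2
  push_cast [eq_intCast]
  ring

/-- The difference of the two products defining `f` and `g`, cleared of the denominator `n!`,
is divisible by `n (n - 1)`, where `n = N + 1`. -/
lemma dvd_cleared_difference (N : ℕ) (m : ℤ) :
    (C (((N + 1 : ℕ) : ℤ) * (N : ℤ))) ∣
      consecutiveProd N 1 * (C m * X + C ((N + 1 : ℕ) : ℤ)) -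
        consecutiveProd N (1 - N) * (C m * (X - C (N : ℤ)) + C ((N + 1 : ℕ) : ℤ)) := by
  obtain ⟨u, hu⟩ := dvd_consecutiveProd_shift N (1 - N) N
  obtain ⟨v, hv⟩ := dvd_consecutiveProd_shift (N + 1) (1 - N) N
  rw [show (1 - (N : ℤ) + N) = 1 by ring] at hu hv
  obtain ⟨w, hw⟩ := dvd_consecutiveProd_shift (N + 1) 0 1
  rw [Nat.cast_one, zero_add] at hw
  have h0 := consecutiveProd_succ_left N 0
  have h1 := consecutiveProd_succ N (1 - N)
  rw [show (1 - (N : ℤ) + N) = 1 by ring] at h1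
  rw [zero_add] at h0
  rw [C_mul]
  refine IsCoprime.mul_dvd ⟨1, -1, ?_⟩ ?_ ?_
  · simp
  · refine ⟨C m * (v - w) + consecutiveProd N 1 - consecutiveProd N (1 - N)
      + C m * consecutiveProd N (1 - N), ?_⟩
    simp only [map_zero, map_one, add_zero, Nat.cast_add, Nat.cast_one, map_add] at *
    linear_combination C m * hv - C m * hw - C m * h0 + C m * h1
  · refine ⟨(C m * X + C ((N + 1 : ℕ) : ℤ)) * u + C m * consecutiveProd N (1 - N), ?_⟩
    linear_combination (C m * X + C ((N + 1 : ℕ) : ℤ)) * hu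

/-- The combination of leading parts that occurs in `h` has leading term `X ^ (k + 2)`. -/
lemma exists_eq_X_pow_add (k : ℕ) (m : ℚ) {A B : ℚ[X]}
    (hA : HasLeadingPart k A
      ((k + 2) * (k + 3) / 2) ((k + 3) * (k + 2) * (k + 1) * (3 * k + 8) / 24))
    (hB : HasLeadingPart k B
      (-((k + 2) * (k + 1) / 2)) ((k + 2) * (k + 1) * k * (3 * k + 5) / 24)) :
    ∃ R : ℚ[X], R.degree < ((k + 2 : ℕ) : WithBot ℕ) ∧
      C (1 / 2) * (A * (C m * X + C ((k : ℚ) + 3)) +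
          B * (C m * (X - C ((k : ℚ) + 2)) + C ((k : ℚ) + 3))) -
        C (1 / (((k : ℚ) + 3) * (k + 2))) * X * (A * (C m * X + C ((k : ℚ) + 3)) -
          B * (C m * (X - C ((k : ℚ) + 2)) + C ((k : ℚ) + 3))) = X ^ (k + 2) + R := by
  obtain ⟨r, hr, rfl⟩ := hA
  obtain ⟨q, hq, rfl⟩ := hB
  set K : ℚ := (k : ℚ)
  set s := (K + 2) * (K + 3) / 2 with hs
  set t := (K + 3) * (K + 2) * (K + 1) * (3 * K + 8) / 24 with ht
  set s' := -((K + 2) * (K + 1) / 2) with hs'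
  set t' := (K + 2) * (K + 1) * K * (3 * K + 5) / 24 with ht'
  set d := 1 / ((K + 3) * (K + 2)) with hd
  set b := K + 3 - m * (K + 2) with hb
  have hK0 : 0 ≤ K := Nat.cast_nonneg k
  have hdinv : d * ((K + 3) * (K + 2)) = 1 := by
    rw [hd]; field_simp
  -- the coefficients of `X ^ (k + 3)` and `X ^ (k + 2)`
  have top : m - d * ((K + 3 + m * s) - (b + m * s')) = 0 := by
    rw [hs, hs', hb]; linear_combination (-m) * hdinv
  have next : (1 / 2) * ((K + 3 + m * s) + (b + m * s')) -
      d * (((K + 3) * s + m * t) - (b * s' + m * t')) = 1 := by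
    rw [hs, hs', hb, ht, ht']
    linear_combination (-(K + 2)) * hdinv
  have topC := congrArg (C : ℚ → ℚ[X]) top
  have nextC := congrArg (C : ℚ → ℚ[X]) next
  have quad : ∀ (p : ℚ[X]) (x y z : ℚ), p.degree < (k : WithBot ℕ) →
      (p * (C x * X ^ 2 + C y * X + C z)).degree < ((k + 2 : ℕ) : WithBot ℕ) := by
    intro p x y z hp
    rw [degree_mul, Nat.cast_add]
    exact (add_le_add le_rfl degree_quadratic_le).trans_lt (WithBot.add_lt_add_right (by decide) hp)
  refine ⟨C ((1 / 2) * (((K + 3) * s + m * t) + (b * s' + m * t'))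
        - d * ((K + 3) * t - b * t')) * X ^ (k + 1)
      + C ((1 / 2) * ((K + 3) * t + b * t')) * X ^ k
      + r * (C (-(d * m)) * X ^ 2 + C ((1 / 2) * m - d * (K + 3)) * X + C ((1 / 2) * (K + 3)))
      + q * (C (d * m) * X ^ 2 + C ((1 / 2) * m + d * b) * X + C ((1 / 2) * b)), ?_, ?_⟩
  · refine (degree_add_le _ _).trans_lt (max_lt ?_ (quad _ _ _ _ hq))
    refine (degree_add_le _ _).trans_lt (max_lt ?_ (quad _ _ _ _ hr))
    refine (degree_add_le _ _).trans_lt (max_lt ?_ ?_)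
    · exact (degree_C_mul_X_pow_le _ _).trans_lt (by exact_mod_cast (by omega : k + 1 < k + 2))
    · exact (degree_C_mul_X_pow_le _ _).trans_lt (by exact_mod_cast (by omega : k < k + 2))
  · clear_value s t s' t' d b
    have hhalf : (C (1 / 2) : ℚ[X]) * 2 = 1 := by
      rw [show (2 : ℚ[X]) = C 2 from rfl, ← C_mul]; norm_num
    subst hb
    simp only [map_add, map_sub, map_mul, map_neg, map_zero, map_one] at topC nextC ⊢
    linear_combination X ^ (k + 3) * topC + X ^ (k + 2) * nextC + C m * X ^ (k + 3) * hhalf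

/-- For `n ≥ 3`, `m ≥ 1`, with
`f(X) = (1/n!) ∏_{i=1}^{n-1}(X+i) ⬝ (mX + n)`,
`g(X) = (1/n!) ∏_{i=1}^{n-1}(X-i+1) ⬝ (m(X-n+1) + n)`, and
`h(X) = (n!/2)(f(X)+g(X)) - (n-2)! X (f(X)-g(X))` in `ℚ[X]`,
the polynomial `h` is monic of degree `n - 1` and has integer coefficients. -/
theorem h_monic_int_coeffs
    (n m : ℕ) (hn : 3 ≤ n) (hm : 1 ≤ m) (f g h : ℚ[X])
    (hf : f = C (1 / (n.factorial : ℚ)) *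
      ((∏ i ∈ Finset.Icc 1 (n - 1), (X + C (i : ℚ))) * (C (m : ℚ) * X + C (n : ℚ))))
    (hg : g = C (1 / (n.factorial : ℚ)) *
      ((∏ i ∈ Finset.Icc 1 (n - 1), (X - C (i : ℚ) + 1)) *
        (C (m : ℚ) * (X - C (n : ℚ) + 1) + C (n : ℚ))))
    (hh : h = C ((n.factorial : ℚ) / 2) * (f + g) - C (((n - 2).factorial : ℚ)) * X * (f - g)) :
    h.Monic ∧ h.natDegree = n - 1 ∧ ∀ j : ℕ, ∃ z : ℤ, h.coeff j = (z : ℚ) := by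
  obtain ⟨k, rfl⟩ : ∃ k, n = k + 3 := ⟨n - 3, by omega⟩
  rw [show k + 3 - 1 = k + 2 by omega] at *
  rw [show k + 3 - 2 = k + 1 by omega] at hh
  rw [prod_Icc_one_eq_prod_range] at hf hg
  set A : ℚ[X] := ∏ i ∈ Finset.range (k + 2), (X + C ((i : ℚ) + 1)) with hA
  set B : ℚ[X] := ∏ i ∈ Finset.range (k + 2), (X + C (-(i : ℚ))) with hB
  have hA' : ∏ i ∈ Finset.range (k + 2), (X + C ((i + 1 : ℕ) : ℚ)) = A :=
    Finset.prod_congr rfl fun i _ => by push_cast; rfl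
  have hB' : ∏ i ∈ Finset.range (k + 2), (X - C ((i + 1 : ℕ) : ℚ) + 1) = B :=
    Finset.prod_congr rfl fun i _ => by
      simp only [Nat.cast_add, Nat.cast_one, map_add, map_one, map_neg]; ring
  rw [hA'] at hf
  rw [hB'] at hg
  have hcast : ∀ a : ℕ, Int.castRingHom ℚ (a : ℤ) = (a : ℚ) := by simp
  have cast_two : ((k + 2 : ℕ) : ℚ) = k + 2 := by push_cast; rfl
  have cast_three : ((k + 3 : ℕ) : ℚ) = k + 3 := by push_cast; rfl
  set F : ℚ[X] := A * (C (m : ℚ) * X + C ((k : ℚ) + 3)) with hF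
  set G : ℚ[X] := B * (C (m : ℚ) * (X - C ((k : ℚ) + 2)) + C ((k : ℚ) + 3)) with hG
  have hfF : f = C (1 / ((k + 3).factorial : ℚ)) * F := by
    rw [hf, hF]; push_cast; rfl
  have hgG : g = C (1 / ((k + 3).factorial : ℚ)) * G := by
    rw [hg, hG]
    simp only [Nat.cast_add, Nat.cast_ofNat, map_add]
    rw [show (C (3 : ℚ) : ℚ[X]) = C 2 + 1 by rw [← C_1, ← C_add]; norm_num]
    ring
  have hfac : ((k + 3).factorial : ℚ) = (k + 3) * (k + 2) * ((k + 1).factorial : ℚ) := by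
    rw [Nat.factorial_succ (k + 2), Nat.factorial_succ (k + 1)]; push_cast; ring
  have hpos : ((k + 1).factorial : ℚ) ≠ 0 := by exact_mod_cast (k + 1).factorial_ne_zero
  have hhalf : (C (((k + 3).factorial : ℚ) / 2) : ℚ[X]) * C (1 / ((k + 3).factorial : ℚ))
      = C (1 / 2) := by
    rw [← C_mul]; congr 1
    have : ((k + 3).factorial : ℚ) ≠ 0 := by exact_mod_cast (k + 3).factorial_ne_zero
    field_simp
  have hquot : (C ((k + 1).factorial : ℚ) : ℚ[X]) * C (1 / ((k + 3).factorial : ℚ))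
      = C (1 / (((k : ℚ) + 3) * (k + 2))) := by
    rw [← C_mul, hfac]; congr 1
    field_simp
  have hval : h = C (1 / 2) * (F + G) - C (1 / (((k : ℚ) + 3) * (k + 2))) * X * (F - G) := by
    rw [hh, hfF, hgG]
    linear_combination (F + G) * hhalf - X * (F - G) * hquot
  obtain ⟨R, hR, hRh⟩ :=
    exists_eq_X_pow_add k (m : ℚ) (hasLeadingPart_rising k) (hasLeadingPart_falling k)
  have hlead : h = X ^ (k + 2) + R := hval.trans hRh
  refine ⟨hlead ▸ monic_X_pow_add hR, ?_, ?_⟩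
  · rw [hlead, natDegree_add_eq_left_of_degree_lt (by rwa [degree_X_pow]), natDegree_X_pow]
  · obtain ⟨D, hD⟩ := dvd_cleared_difference (k + 2) (m : ℤ)
    obtain ⟨c, hc⟩ : Even ((k + 2) * (k + 3)) := Nat.even_mul_succ_self (k + 2)
    have hDQ := congrArg (Polynomial.map (Int.castRingHom ℚ)) hD
    simp only [Polynomial.map_sub, Polynomial.map_mul, Polynomial.map_add, map_X, map_C,
      map_consecutiveProd_one, map_consecutiveProd_falling, C_mul, hcast,
      show k + 2 + 1 = k + 3 from rfl, cast_two, cast_three] at hDQ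
    have hDF : F - G = C (((k : ℚ) + 3) * (k + 2)) * D.map (Int.castRingHom ℚ) := by
      rw [C_mul]; exact hDQ
    set G' : ℤ[X] := consecutiveProd (k + 2) (1 - (k + 2 : ℕ)) *
      (C (m : ℤ) * (X - C ((k + 2 : ℕ) : ℤ)) + C ((k + 3 : ℕ) : ℤ)) with hG'
    have hGmap : G'.map (Int.castRingHom ℚ) = G := by
      simp only [hG', Polynomial.map_sub, Polynomial.map_mul, Polynomial.map_add, map_X, map_C,
        map_consecutiveProd_falling, hcast, cast_two, cast_three]
      rfl
    have hcQ : ((k : ℚ) + 3) * (k + 2) = 2 * c := by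
      have : ((k : ℚ) + 2) * (k + 3) = c + c := by exact_mod_cast hc
      linear_combination this
    have eq_map : h = (C (c : ℤ) * D + G' - X * D).map (Int.castRingHom ℚ) := by
      have half_mul : (C (1 / 2) : ℚ[X]) * C (((k : ℚ) + 3) * (k + 2)) = C (c : ℚ) := by
        rw [← C_mul, hcQ]; congr 1; ring
      have inv_mul : (C (1 / (((k : ℚ) + 3) * (k + 2))) : ℚ[X]) * C (((k : ℚ) + 3) * (k + 2))
          = 1 := by
        rw [← C_mul, ← C_1]; congr 1; field_simp
      have half_two : (C (1 / 2) : ℚ[X]) * 2 = 1 := by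
        rw [show (2 : ℚ[X]) = C 2 from rfl, ← C_mul]; norm_num
      rw [Polynomial.map_sub, Polynomial.map_add, hGmap, Polynomial.map_mul, Polynomial.map_mul,
        map_C, map_X, eq_intCast, Int.cast_natCast, hval]
      linear_combination (C (1 / 2) - C (1 / (((k : ℚ) + 3) * (k + 2))) * X) * hDF +
        D.map (Int.castRingHom ℚ) * half_mul - X * D.map (Int.castRingHom ℚ) * inv_mul +
        G * half_two
    exact fun j => ⟨(C (c : ℤ) * D + G' - X * D).coeff j, by rw [eq_map, coeff_map, eq_intCast]⟩
end

section
/- Let n ≥ 1 and j ≥ 0 be integers with j ≤ n and with n − j odd. Let c(n,j) denote the signless Stirling number of the first kind, i.e., the coefficient of X^j in the polynomial X(X+1)(X+2)⋯(X+n−1) ∈ ℤ[X]. Then the binomial coefficient C(n,2) = n(n−1)/2 divides c(n,j). -/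
open Polynomial

/-- If the roots of `∏_{i<m} (X + a + i)` are symmetric about `0`, then twice any coefficient whose
index has parity different from `m` vanishes. -/
theorem two_mul_coeff_prod_X_add_C_eq_zero {R : Type*} [CommRing R] {a : R} {m k : ℕ}
    (ha : 2 * a + m = 1) (hmk : Odd (m + k)) :
    2 * (∏ i ∈ Finset.range m, ((X : R[X]) + C (a + (i : R)))).coeff k = 0 := by
  set f : R[X] := ∏ i ∈ Finset.range m, ((X : R[X]) + C (a + (i : R))) with hf
  have hcomp : f.comp (-X) = (-1) ^ m * f := by
    rw [hf, prod_comp, ← Finset.prod_range_reflect, ← Finset.card_range m, ← Finset.prod_const,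
      Finset.card_range, ← Finset.prod_mul_distrib]
    refine Finset.prod_congr rfl fun i hi ↦ ?_
    have hcast : ((m - 1 - i : ℕ) : R) = m - 1 - i := by
      have him : m - 1 - i + (1 + i) = m := by have := Finset.mem_range.mp hi; omega
      have := congrArg (Nat.cast (R := R)) him
      push_cast at this
      linear_combination this
    have hreflect : a + ((m - 1 - i : ℕ) : R) = -(a + i) := by
      rw [hcast]; linear_combination ha
    rw [hreflect]
    rw [add_comp, X_comp, C_comp, C_neg]
    ring
  have hcoeff := congrArg (fun p : R[X] ↦ p.coeff k) hcomp
  have hC : ((-1) ^ m : R[X]) = C ((-1) ^ m) := by simp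
  have hX : (-X : R[X]) = C (-1) * X := by simp
  simp only [hX, comp_C_mul_X_coeff, hC, coeff_C_mul] at hcoeff
  have hsign : ((-1 : R) ^ m) * (-1) ^ k = -1 := by rw [← pow_add, hmk.neg_one_pow]
  have hsq : ((-1 : R) ^ k) * (-1) ^ k = 1 := by rw [← mul_pow]; simp
  linear_combination (-1) ^ k * hcoeff + f.coeff k * hsign - f.coeff k * hsq

/-- Integer form of `two_mul_coeff_prod_X_add_C_eq_zero`, modulo `N = 2 a + m - 1`. -/
theorem dvd_two_mul_coeff_prod_X_add_C {a N m k : ℕ} (ha : 2 * a + m = N + 1)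
    (hmk : Odd (m + k)) :
    (N : ℤ) ∣ 2 * (∏ i ∈ Finset.range m, ((X : ℤ[X]) + C ((a : ℤ) + (i : ℤ)))).coeff k := by
  rw [← ZMod.intCast_zmod_eq_zero_iff_dvd]
  have ha' : 2 * (a : ZMod N) + m = 1 := by
    have := congrArg (Nat.cast (R := ZMod N)) ha
    simpa using this
  have h := two_mul_coeff_prod_X_add_C_eq_zero ha' hmk
  rw [Int.cast_mul, ← eq_intCast (Int.castRingHom (ZMod N)) (coeff _ _), ← coeff_map,
    Polynomial.map_prod]
  simpa using h

/-- If `1 ≤ n`, `j ≤ n` and `n - j` is odd, then the binomial coefficient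
`C(n,2) = n(n-1)/2` divides the signless Stirling number of the first kind `c(n,j)`,
i.e. the coefficient of `X^j` in `∏_{i=1}^{n} (X + i - 1) = X(X+1)⋯(X+n-1)`. -/
theorem choose_two_dvd_stirling_first
    (n j : ℕ) (hn : 1 ≤ n) (hj : j ≤ n) (hodd : Odd (n - j)) :
    ((n.choose 2 : ℤ)) ∣ (∏ i ∈ Finset.Icc 1 n, ((X : ℤ[X]) + C (i : ℤ) - 1)).coeff j := by
  obtain ⟨m, rfl⟩ := Nat.exists_eq_add_of_le' hn
  have hprod : ∏ i ∈ Finset.Icc 1 (m + 1), ((X : ℤ[X]) + C (i : ℤ) - 1) =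
      ∏ i ∈ Finset.range (m + 1), ((X : ℤ[X]) + C (((0 : ℕ) : ℤ) + (i : ℤ))) := by
    rw [Finset.range_eq_Ico, Finset.prod_Ico_eq_prod_range,
      ← Finset.Ico_add_one_right_eq_Icc, Finset.prod_Ico_eq_prod_range]
    exact Finset.prod_congr rfl fun i _ ↦ by push_cast; simp; ring
  have hshift : ∏ i ∈ Finset.range (m + 1), ((X : ℤ[X]) + C (((0 : ℕ) : ℤ) + (i : ℤ))) =
      (∏ i ∈ Finset.range m, ((X : ℤ[X]) + C (((1 : ℕ) : ℤ) + (i : ℤ)))) * X := by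
    rw [Finset.prod_range_succ']
    simp [add_comm]
  have hparity : Odd (m + 1 + j) := by
    rw [Nat.odd_iff] at hodd ⊢
    omega
  rw [hprod]
  have hm := dvd_two_mul_coeff_prod_X_add_C (a := 0) (N := m) (by omega) hparity
  have hm1 : ((m + 1 : ℕ) : ℤ) ∣ 2 *
      (∏ i ∈ Finset.range (m + 1), ((X : ℤ[X]) + C (((0 : ℕ) : ℤ) + (i : ℤ)))).coeff j := by
    rw [hshift]
    cases j with
    | zero => simp
    | succ k =>
      rw [coeff_mul_X]
      refine dvd_two_mul_coeff_prod_X_add_C (by omega) ?_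
      rw [Nat.odd_iff] at hparity ⊢
      omega
  have hcop : IsCoprime ((m + 1 : ℕ) : ℤ) (m : ℤ) := ⟨1, -1, by push_cast; ring⟩
  have hchoose : 2 * ((m + 1).choose 2 : ℤ) = ((m + 1 : ℕ) : ℤ) * m := by
    have := Nat.add_one_mul_choose_eq m 1
    rw [Nat.choose_one_right] at this
    rw [mul_comm]
    exact_mod_cast this.symm
  refine (mul_dvd_mul_iff_left (two_ne_zero (α := ℤ))).mp ?_
  rw [hchoose]
  exact hcop.mul_dvd hm1 hm
end

section
/- Let m ≥ 2 be an integer, let p be a positive divisor of m with p < m, and let k be any integer. Suppose that 2m² divides p·(k+m−1)·(k + 2m/p − 1) in ℤ and that 2m² divides p·(k−1)·(k+m−1) in ℤ. Then m divides k − 1. -/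
/-- For `m ≥ 2`, `p` a positive divisor of `m` with `p < m`, and any integer `k`:
if `2m²` divides both `p (k + m - 1)(k + 2m/p - 1)` and `p (k - 1)(k + m - 1)` in `ℤ`,
then `m ∣ k - 1`. -/
theorem mult_chi_eta_integer_imp_k_equiv_one
    (m p : ℕ) (hm : 2 ≤ m) (hp : 0 < p) (hpm : p ∣ m) (hplt : p < m) (k : ℤ)
    (h1 : (2 * (m : ℤ) ^ 2) ∣ (p : ℤ) * (k + m - 1) * (k + ((2 * m / p : ℕ) : ℤ) - 1))
    (h2 : (2 * (m : ℤ) ^ 2) ∣ (p : ℤ) * (k - 1) * (k + m - 1)) :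
    (m : ℤ) ∣ k - 1 := by
  obtain ⟨d, rfl⟩ := hpm
  have hdiv : 2 * (p * d) / p = 2 * d := by
    rw [Nat.mul_left_comm, Nat.mul_div_cancel_left _ hp]
  rw [hdiv] at h1
  have hne : (2 * ((p * d : ℕ) : ℤ)) ≠ 0 := by
    exact_mod_cast (by omega : 2 * (p * d) ≠ 0)
  have hsub : 2 * ((p * d : ℕ) : ℤ) * ((p * d : ℕ) : ℤ) ∣
      2 * ((p * d : ℕ) : ℤ) * (k - 1 + ((p * d : ℕ) : ℤ)) := by
    have h := dvd_sub h1 h2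
    push_cast at h ⊢
    ring_nf at h ⊢
    exact h
  exact dvd_add_self_right.mp (Int.dvd_of_mul_dvd_mul_left hne hsub)
end
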